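/- Let f : ℝ^m → ℝ and g : ℝ^n → ℝ be differentiable, A ∈ ℝ^{m×n}, η > 0, and let z_k = (x_k, y_k) evolve following the alternating method x_{k+1} = x_k − η A ∇g(y_k), y_{k+1} = y_k + η Aᵀ ∇f(x_{k+1}). Define p_k = ∇f(x_k), q_k = ∇g(y_k), and for arbitrary z = (x, y) ∈ ℝ^{m+n} set p = ∇f(x), q = ∇g(y). Then the cumulative regret R_K(p, q) = R_{1,K}(p) + R_{2,K}(q) satisfies the exact identity R_K(p, q) = (1/η)(D_H(z₀, z) − D_H(z_K, z) + H_η(z_K) − H_η(z₀)), where H(x,y) = f(x) + g(y), D_H is its Bregman divergence, and H_η(x,y) = H(x,y) − (η/2)⟨∇f(x), A ∇g(y)⟩. -/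

import Mathlib

open RealInnerProductSpace Matrix

/-- The Bregman divergence `D_f(x', x) = f(x') − f(x) − ⟨∇f(x), x' − x⟩`. -/
noncomputable def bregman {m : ℕ} (f : EuclideanSpace ℝ (Fin m) → ℝ)
    (x' x : EuclideanSpace ℝ (Fin m)) : ℝ :=
  f x' - f x - ⟪gradient f x, x' - x⟫

/-- The modified energy `H_η(x, y) = f(x) + g(y) − (η/2)⟨∇f(x), A ∇g(y)⟩`. -/
noncomputable def modifiedEnergy {m n : ℕ} (f : EuclideanSpace ℝ (Fin m) → ℝ)
    (g : EuclideanSpace ℝ (Fin n) → ℝ) (A : Matrix (Fin m) (Fin n) ℝ) (η : ℝ)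
    (x : EuclideanSpace ℝ (Fin m)) (y : EuclideanSpace ℝ (Fin n)) : ℝ :=
  f x + g y - η / 2 * ⟪gradient f x, Matrix.toEuclideanLin A (gradient g y)⟫

/-- Regret of the first player after `K` iterations, with `p_k = ∇f(x_k)`, `q_k = ∇g(y_k)`. -/
noncomputable def regret1 {m n : ℕ} (f : EuclideanSpace ℝ (Fin m) → ℝ)
    (g : EuclideanSpace ℝ (Fin n) → ℝ) (A : Matrix (Fin m) (Fin n) ℝ)
    (x : ℕ → EuclideanSpace ℝ (Fin m)) (y : ℕ → EuclideanSpace ℝ (Fin n)) (K : ℕ)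
    (p : EuclideanSpace ℝ (Fin m)) : ℝ :=
  ∑ k ∈ Finset.range K, ⟪(2:ℝ)⁻¹ • (gradient f (x k) + gradient f (x (k+1))),
      Matrix.toEuclideanLin A (gradient g (y k))⟫ -
    ∑ k ∈ Finset.range K, ⟪p, Matrix.toEuclideanLin A (gradient g (y k))⟫

/-- Regret of the second player after `K` iterations, with `p_k = ∇f(x_k)`, `q_k = ∇g(y_k)`. -/
noncomputable def regret2 {m n : ℕ} (f : EuclideanSpace ℝ (Fin m) → ℝ)
    (g : EuclideanSpace ℝ (Fin n) → ℝ) (A : Matrix (Fin m) (Fin n) ℝ)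
    (x : ℕ → EuclideanSpace ℝ (Fin m)) (y : ℕ → EuclideanSpace ℝ (Fin n)) (K : ℕ)
    (q : EuclideanSpace ℝ (Fin n)) : ℝ :=
  ∑ k ∈ Finset.range K, ⟪gradient f (x (k+1)), Matrix.toEuclideanLin A q⟫ -
    ∑ k ∈ Finset.range K, ⟪gradient f (x (k+1)),
      Matrix.toEuclideanLin A ((2:ℝ)⁻¹ • (gradient g (y k) + gradient g (y (k+1))))⟫

/-!
Each iterate moves by `η` times the other player's payoff vector, so a fixed comparator earns
`1/η` times its pairing with the total displacement. In the averaged payoffs, the cross terms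
`⟨p_{k+1}, A q_k⟩` of the two players cancel, because the second player already
responds to `p_{k+1}`; what remains is a telescoping sum of `½⟨p_k, A q_k⟩`. The displacement
pairings are differences of Bregman divergences up to values of `H`, and these values together
with the boundary terms at `k = 0` and `k = K` make up the modified energy.
-/

section

variable {E F : Type*} [NormedAddCommGroup E] [InnerProductSpace ℝ E]
  [NormedAddCommGroup F] [InnerProductSpace ℝ F]

/-- The Bregman divergence of `f` in which a map `f'`, such as a selection of subgradients, takes
the place of the gradient. -/
def bregmanWith (f : E → ℝ) (f' : E → E) (x' x : E) : ℝ :=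
  f x' - f x - ⟪f' x, x' - x⟫

/-- The modified energy of the alternating method in which maps `f'` and `g'`, such as selections
of subgradients, take the place of the gradients of `f` and `g`. -/
noncomputable def modifiedEnergyWith (f : E → ℝ) (g : F → ℝ) (f' : E → E) (g' : F → F)
    (A : F →ₗ[ℝ] E) (η : ℝ) (x : E) (y : F) : ℝ :=
  f x + g y - η / 2 * ⟪f' x, A (g' y)⟫

/-- Regret of the minimizing player of the bilinear game `⟪p, A q⟫` against the fixed strategy `u`
after `K` alternating rounds; round `k` is charged at the average of the strategies `p k` and
`p (k + 1)`, both of which face `q k`. -/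
noncomputable def minRegret (A : F →ₗ[ℝ] E) (p : ℕ → E) (q : ℕ → F) (K : ℕ) (u : E) : ℝ :=
  ∑ k ∈ Finset.range K, ⟪(2 : ℝ)⁻¹ • (p k + p (k + 1)), A (q k)⟫ -
    ∑ k ∈ Finset.range K, ⟪u, A (q k)⟫

/-- Regret of the maximizing player of the bilinear game `⟪p, A q⟫` against the fixed strategy `v`
after `K` alternating rounds; this player moves second, so both `q k` and `q (k + 1)` face
`p (k + 1)`. -/
noncomputable def maxRegret (A : F →ₗ[ℝ] E) (p : ℕ → E) (q : ℕ → F) (K : ℕ) (v : F) : ℝ :=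
  ∑ k ∈ Finset.range K, ⟪p (k + 1), A v⟫ -
    ∑ k ∈ Finset.range K, ⟪p (k + 1), A ((2 : ℝ)⁻¹ • (q k + q (k + 1)))⟫

theorem bregmanWith_sub_bregmanWith (f : E → ℝ) (f' : E → E) (a b x : E) :
    bregmanWith f f' a x - bregmanWith f f' b x = f a - f b + ⟪f' x, b - a⟫ := by
  simp only [bregmanWith, inner_sub_right]
  ring

theorem mul_sum_inner_eq_inner_sub {η : ℝ} {x w : ℕ → E} (hx : ∀ k, x (k + 1) = x k + η • w k)
    (u : E) (K : ℕ) :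
    η * ∑ k ∈ Finset.range K, ⟪u, w k⟫ = ⟪u, x K - x 0⟫ := by
  have increment (k : ℕ) : η • w k = x (k + 1) - x k := by rw [hx k, add_sub_cancel_left]
  simp only [← inner_sum, ← real_inner_smul_right, Finset.smul_sum, increment,
    Finset.sum_range_sub]

theorem sum_inner_midpoint_sub_sum_inner_midpoint (A : F →ₗ[ℝ] E) (p : ℕ → E) (q : ℕ → F)
    (K : ℕ) :
    ∑ k ∈ Finset.range K, ⟪(2 : ℝ)⁻¹ • (p k + p (k + 1)), A (q k)⟫ -
        ∑ k ∈ Finset.range K, ⟪p (k + 1), A ((2 : ℝ)⁻¹ • (q k + q (k + 1)))⟫ =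
      (⟪p 0, A (q 0)⟫ - ⟪p K, A (q K)⟫) / 2 := by
  have cross_terms_cancel (k : ℕ) :
      ⟪(2 : ℝ)⁻¹ • (p k + p (k + 1)), A (q k)⟫ -
          ⟪p (k + 1), A ((2 : ℝ)⁻¹ • (q k + q (k + 1)))⟫ =
        ⟪p k, A (q k)⟫ / 2 - ⟪p (k + 1), A (q (k + 1))⟫ / 2 := by
    simp only [map_smul, map_add, real_inner_smul_left, real_inner_smul_right, inner_add_left,
      inner_add_right]
    ring
  rw [← Finset.sum_sub_distrib, Finset.sum_congr rfl fun k _ => cross_terms_cancel k,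
    Finset.sum_range_sub' (fun k => ⟪p k, A (q k)⟫ / 2), sub_div]

variable {A : F →ₗ[ℝ] E} {B : E → F} {η : ℝ} {x : ℕ → E} {y : ℕ → F}

theorem mul_minRegret_add_maxRegret (hAB : ∀ a b, ⟪b, B a⟫ = ⟪a, A b⟫) {p : ℕ → E} {q : ℕ → F}
    (hx : ∀ k, x (k + 1) = x k - η • A (q k)) (hy : ∀ k, y (k + 1) = y k + η • B (p (k + 1)))
    (u : E) (v : F) (K : ℕ) :
    η * (minRegret A p q K u + maxRegret A p q K v) =
      ⟪u, x K - x 0⟫ + ⟪v, y K - y 0⟫ + η / 2 * (⟪p 0, A (q 0)⟫ - ⟪p K, A (q K)⟫) := by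
  have min_comparator : -η * ∑ k ∈ Finset.range K, ⟪u, A (q k)⟫ = ⟪u, x K - x 0⟫ :=
    mul_sum_inner_eq_inner_sub (fun k => by rw [hx k, neg_smul, sub_eq_add_neg]) u K
  have max_comparator : η * ∑ k ∈ Finset.range K, ⟪p (k + 1), A v⟫ = ⟪v, y K - y 0⟫ := by
    simpa only [hAB] using mul_sum_inner_eq_inner_sub hy v K
  have played := sum_inner_midpoint_sub_sum_inner_midpoint A p q K
  unfold minRegret maxRegret
  linear_combination min_comparator + max_comparator + η * played

theorem regret_eq_modifiedEnergy_diff_general (hAB : ∀ a b, ⟪b, B a⟫ = ⟪a, A b⟫) (hη : η ≠ 0)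
    (f : E → ℝ) (g : F → ℝ) {f' : E → E} {g' : F → F}
    (hx : ∀ k, x (k + 1) = x k - η • A (g' (y k)))
    (hy : ∀ k, y (k + 1) = y k + η • B (f' (x (k + 1)))) (xh : E) (yh : F) (K : ℕ) :
    minRegret A (fun k => f' (x k)) (fun k => g' (y k)) K (f' xh) +
        maxRegret A (fun k => f' (x k)) (fun k => g' (y k)) K (g' yh) =
      (1 / η) * ((bregmanWith f f' (x 0) xh + bregmanWith g g' (y 0) yh) -
        (bregmanWith f f' (x K) xh + bregmanWith g g' (y K) yh) +
        (modifiedEnergyWith f g f' g' A η (x K) (y K) -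
          modifiedEnergyWith f g f' g' A η (x 0) (y 0))) := by
  have regret := mul_minRegret_add_maxRegret (p := fun k => f' (x k)) (q := fun k => g' (y k))
    hAB hx hy (f' xh) (g' yh) K
  have bregman_f := bregmanWith_sub_bregmanWith f f' (x 0) (x K) xh
  have bregman_g := bregmanWith_sub_bregmanWith g g' (y 0) (y K) yh
  rw [one_div, eq_inv_mul_iff_mul_eq₀ hη, regret]
  unfold modifiedEnergyWith
  linear_combination -bregman_f - bregman_g

end

theorem inner_toEuclideanLin_transpose {m n : Type*} [Fintype m] [Fintype n] [DecidableEq m]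
    [DecidableEq n] (A : Matrix m n ℝ) (a : EuclideanSpace ℝ m) (b : EuclideanSpace ℝ n) :
    ⟪b, Matrix.toEuclideanLin Aᵀ a⟫ = ⟪a, Matrix.toEuclideanLin A b⟫ := by
  rw [← conjTranspose_eq_transpose_of_trivial, toEuclideanLin_conjTranspose_eq_adjoint,
    LinearMap.adjoint_inner_right, real_inner_comm]

/-- **Cumulative regret of alternating mirror descent in terms of the modified energy.**
Along the alternating method `x_{k+1} = x_k − η A ∇g(y_k)`, `y_{k+1} = y_k + η Aᵀ ∇f(x_{k+1})`,
for any reference dual point `z = (x̂, ŷ)` with `p = ∇f(x̂)`, `q = ∇g(ŷ)`: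
`R_K(p, q) = (1/η)(D_H(z₀, z) − D_H(z_K, z) + H_η(z_K) − H_η(z₀))`. -/
theorem regret_eq_modifiedEnergy_diff {m n : ℕ}
    (f : EuclideanSpace ℝ (Fin m) → ℝ) (g : EuclideanSpace ℝ (Fin n) → ℝ)
    (hf : Differentiable ℝ f) (hg : Differentiable ℝ g)
    (A : Matrix (Fin m) (Fin n) ℝ) (η : ℝ) (hη : 0 < η)
    (x : ℕ → EuclideanSpace ℝ (Fin m)) (y : ℕ → EuclideanSpace ℝ (Fin n))
    (hx : ∀ k, x (k+1) = x k - η • Matrix.toEuclideanLin A (gradient g (y k)))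
    (hy : ∀ k, y (k+1) = y k + η • Matrix.toEuclideanLin Aᵀ (gradient f (x (k+1))))
    (xh : EuclideanSpace ℝ (Fin m)) (yh : EuclideanSpace ℝ (Fin n)) (K : ℕ) :
    regret1 f g A x y K (gradient f xh) + regret2 f g A x y K (gradient g yh) =
      (1 / η) * ((bregman f (x 0) xh + bregman g (y 0) yh) -
        (bregman f (x K) xh + bregman g (y K) yh) +
        (modifiedEnergy f g A η (x K) (y K) - modifiedEnergy f g A η (x 0) (y 0))) :=
  regret_eq_modifiedEnergy_diff_general (inner_toEuclideanLin_transpose A) hη.ne' f g hx hy xh yh K
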